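/- arXiv:1411.0882 — 2 statements merged into one kernel-verified Lean document; each statement's English description precedes it below -/
import Mathlib

section
/- Let A, B, C be affinely independent points in the Euclidean plane ℝ², write a = dist(B,C), b = dist(C,A), c = dist(A,B), let s = (a+b+c)/2 be the semiperimeter, let γ be the interior angle at the vertex C (the Euclidean angle ∠(A,C,B)), and let r be the inradius of the triangle ABC. Then r = (s − c)·tan(γ/2) (the law of cotangents). -/
open Real EuclideanGeometry Metric

/-- The triangular region determined by three points in the plane:
the convex hull of the vertex set. -/
def triangleRegion (A B C : EuclideanSpace ℝ (Fin 2)) : Set (EuclideanSpace ℝ (Fin 2)) :=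
  convexHull ℝ {A, B, C}

/-- The inradius of the triangle with vertices `A`, `B`, `C`: the supremum of all
radii `r ≥ 0` such that some closed ball of radius `r` is contained in the
triangular region. -/
noncomputable def triangleInradius (A B C : EuclideanSpace ℝ (Fin 2)) : ℝ :=
  sSup {r : ℝ | 0 ≤ r ∧ ∃ c : EuclideanSpace ℝ (Fin 2),
    closedBall c r ⊆ triangleRegion A B C}

/-!
In a full-dimensional simplex, a ball of radius `r` about `c` fits iff every signed distance from
`c` to a facet is at least `r`. Divided by the corresponding heights these distances sum to `1`, so
`r ≤ (∑ 1 / hᵢ)⁻¹`, which is the radius of the insphere: the largest inscribed ball is the insphere.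
In a triangle, the tangent lengths from the three vertices to the incircle are the semiperimeter
minus the opposite sides, and the segment from `C` to the incenter bisects `γ`; the law is then the
definition of the tangent in the right triangle formed by `C`, the incenter and a touchpoint.
-/

section SignedDist

variable {V P : Type*} [NormedAddCommGroup V] [InnerProductSpace ℝ V] [MetricSpace P]
  [NormedAddTorsor V P]

theorem closedBall_subset_setOf_signedDist_nonneg_iff {v : V} (hv : v ≠ 0) {p c : P} {r : ℝ}
    (hr : 0 ≤ r) : closedBall c r ⊆ {x | 0 ≤ signedDist v p x} ↔ r ≤ signedDist v p c := by
  constructor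
  · intro h
    have norm_unit : ‖NormedSpace.normalize v‖ = 1 := NormedSpace.norm_normalize hv
    -- The point of the ball lying deepest on the negative side.
    have deepest_mem : (-r • NormedSpace.normalize v) +ᵥ c ∈ closedBall c r := by
      simp [dist_eq_norm_vsub V, norm_smul, norm_unit, abs_of_nonneg hr]
    have deepest_nonneg : 0 ≤ signedDist v p ((-r • NormedSpace.normalize v) +ᵥ c) :=
      h deepest_mem
    rw [signedDist_vadd_right, real_inner_smul_right, real_inner_self_eq_norm_sq,
      norm_unit] at deepest_nonneg
    linarith
  · intro h x hx
    calc
      0 ≤ signedDist v p c - r := sub_nonneg.2 h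
      _ ≤ signedDist v p c - signedDist v x c := by
        gcongr
        exact (signedDist_le_dist v x c).trans (mem_closedBall.1 hx)
      _ = signedDist v p x := signedDist_triangle_right v p x c

end SignedDist

section Simplex

variable {V P : Type*} [NormedAddCommGroup V] [InnerProductSpace ℝ V] [MetricSpace P]
  [NormedAddTorsor V P] {n : ℕ} [NeZero n] (s : Affine.Simplex ℝ P n)

theorem signedInfDist_affineCombination_eq_mul_height (i : Fin (n + 1)) {w : Fin (n + 1) → ℝ}
    (hw : ∑ j, w j = 1) :
    s.signedInfDist i (Finset.univ.affineCombination ℝ s.points w) = w i * s.height i := by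
  rw [s.signedInfDist_affineCombination i hw, ← dist_eq_norm_vsub]
  rfl

theorem sum_signedInfDist_div_height {p : P} (hp : p ∈ affineSpan ℝ (Set.range s.points)) :
    ∑ i, s.signedInfDist i p / s.height i = 1 := by
  obtain ⟨w, hw, rfl⟩ := eq_affineCombination_of_mem_affineSpan_of_fintype hp
  simp only [signedInfDist_affineCombination_eq_mul_height s _ hw,
    mul_div_cancel_right₀ _ (s.height_pos _).ne', hw]

theorem mem_closedInterior_iff_forall_signedInfDist_nonneg {p : P}
    (hp : p ∈ affineSpan ℝ (Set.range s.points)) :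
    p ∈ s.closedInterior ↔ ∀ i, 0 ≤ s.signedInfDist i p := by
  obtain ⟨w, hw, rfl⟩ := eq_affineCombination_of_mem_affineSpan_of_fintype hp
  simp only [Affine.Simplex.affineCombination_mem_closedInterior_iff hw, Set.mem_Icc,
    signedInfDist_affineCombination_eq_mul_height s _ hw, mul_nonneg_iff_of_pos_right,
    s.height_pos]
  refine ⟨fun h i ↦ (h i).1, fun h i ↦ ⟨h i, ?_⟩⟩
  exact hw ▸ Finset.single_le_sum (fun j _ ↦ h j) (Finset.mem_univ i)

theorem closedBall_subset_setOf_signedInfDist_nonneg_iff (i : Fin (n + 1)) {c : P} {r : ℝ}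
    (hr : 0 ≤ r) : closedBall c r ⊆ {x | 0 ≤ s.signedInfDist i x} ↔ r ≤ s.signedInfDist i c := by
  refine closedBall_subset_setOf_signedDist_nonneg_iff ?_ hr
  rw [vsub_ne_zero, ne_comm, ne_eq, orthogonalProjection_eq_self_iff,
    s.mem_affineSpan_image_iff]
  simp

theorem closedBall_subset_closedInterior_iff (hs : affineSpan ℝ (Set.range s.points) = ⊤)
    {c : P} {r : ℝ} (hr : 0 ≤ r) :
    closedBall c r ⊆ s.closedInterior ↔ ∀ i, r ≤ s.signedInfDist i c := by
  have closedInterior_eq : s.closedInterior = ⋂ i, {x | 0 ≤ s.signedInfDist i x} := by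
    ext x
    rw [mem_closedInterior_iff_forall_signedInfDist_nonneg s (hs ▸ AffineSubspace.mem_top ℝ V x)]
    simp
  simp only [closedInterior_eq, Set.subset_iInter_iff,
    closedBall_subset_setOf_signedInfDist_nonneg_iff s _ hr]

theorem sum_inv_height_pos : 0 < ∑ i, (s.height i)⁻¹ :=
  Finset.sum_pos (fun i _ ↦ inv_pos.2 (s.height_pos i)) Finset.univ_nonempty

theorem inradius_eq_inv_sum_inv_height : s.inradius = (∑ i, (s.height i)⁻¹)⁻¹ := by
  simp [s.inradius_eq_abs_inv_sum, Affine.Simplex.excenterWeightsUnnorm,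
    abs_of_pos (sum_inv_height_pos s)]

theorem isGreatest_inradius (hs : affineSpan ℝ (Set.range s.points) = ⊤) :
    IsGreatest {r : ℝ | 0 ≤ r ∧ ∃ c, closedBall c r ⊆ s.closedInterior} s.inradius := by
  constructor
  · refine ⟨s.inradius_pos.le, s.incenter, ?_⟩
    rw [closedBall_subset_closedInterior_iff s hs s.inradius_pos.le]
    exact fun i ↦ (s.signedInfDist_incenter i).ge
  · rintro r ⟨hr, c, hc⟩
    rw [closedBall_subset_closedInterior_iff s hs hr] at hc
    rw [inradius_eq_inv_sum_inv_height, ← one_div, le_div_iff₀ (sum_inv_height_pos s)]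
    calc
      r * ∑ i, (s.height i)⁻¹ = ∑ i, r / s.height i := by
        simp only [Finset.mul_sum, div_eq_mul_inv]
      _ ≤ ∑ i, s.signedInfDist i c / s.height i :=
        Finset.sum_le_sum fun i _ ↦ div_le_div_of_nonneg_right (hc i) (s.height_pos i).le
      _ = 1 := sum_signedInfDist_div_height s (hs ▸ AffineSubspace.mem_top ℝ V c)

theorem dist_touchpoint_eq_dist_touchpoint {i j k : Fin (n + 1)} (hij : i ≠ j) (hik : i ≠ k) :
    dist (s.points i) (s.touchpoint ∅ j) = dist (s.points i) (s.touchpoint ∅ k) :=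
  (s.isTangentAt_insphere_touchpoint j).dist_eq_of_mem_of_mem
    (s.isTangentAt_insphere_touchpoint k)
    (s.points_mem_affineSpan_faceOpposite.2 hij) (s.points_mem_affineSpan_faceOpposite.2 hik)

theorem inradius_eq_dist_touchpoint_mul_tan {i j : Fin (n + 1)} (hij : i ≠ j)
    (hne : s.points i ≠ s.touchpoint ∅ j) :
    s.inradius = dist (s.points i) (s.touchpoint ∅ j) *
      tan (∠ s.incenter (s.points i) (s.touchpoint ∅ j)) := by
  have right_angle : ∠ s.incenter (s.touchpoint ∅ j) (s.points i) = π / 2 := by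
    have radius_perp := (s.isTangentAt_insphere_touchpoint j).inner_left_eq_zero_of_mem
      (s.points_mem_affineSpan_faceOpposite.2 hij)
    rw [Affine.Simplex.insphere_center, real_inner_comm, ← neg_vsub_eq_vsub_rev, inner_neg_left,
      neg_eq_zero] at radius_perp
    exact (InnerProductGeometry.inner_eq_zero_iff_angle_eq_pi_div_two _ _).1 radius_perp
  rw [mul_comm, angle_comm, tan_angle_mul_dist_of_angle_eq_pi_div_two right_angle (.inr hne),
    s.dist_incenter]

end Simplex

section Triangle

variable {V P : Type*} [NormedAddCommGroup V] [InnerProductSpace ℝ V] [MetricSpace P]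
  [NormedAddTorsor V P] (t : Affine.Triangle ℝ P) {i₁ i₂ i₃ : Fin 3}

theorem dist_touchpoint_eq_semiperimeter_sub (h₁₂ : i₁ ≠ i₂) (h₁₃ : i₁ ≠ i₃) (h₂₃ : i₂ ≠ i₃) :
    dist (t.points i₁) (t.touchpoint ∅ i₂) =
      (dist (t.points i₃) (t.points i₁) + dist (t.points i₁) (t.points i₂) +
        dist (t.points i₂) (t.points i₃)) / 2 - dist (t.points i₂) (t.points i₃) := by
  have side₁₂ := (t.sbtw_touchpoint_empty h₁₃ h₁₂ h₂₃.symm).wbtw.dist_add_dist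
  have side₂₃ := (t.sbtw_touchpoint_empty h₁₂.symm h₂₃ h₁₃).wbtw.dist_add_dist
  have side₃₁ := (t.sbtw_touchpoint_empty h₂₃.symm h₁₃.symm h₁₂.symm).wbtw.dist_add_dist
  have tangents₁ := dist_touchpoint_eq_dist_touchpoint t h₁₂ h₁₃
  have tangents₂ := dist_touchpoint_eq_dist_touchpoint t h₂₃ h₁₂.symm
  have tangents₃ := dist_touchpoint_eq_dist_touchpoint t h₁₃.symm h₂₃.symm
  grind [dist_comm]

theorem angle_add_angle_of_mem_closedInterior (h₁₂ : i₁ ≠ i₂) (h₁₃ : i₁ ≠ i₃) (h₂₃ : i₂ ≠ i₃)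
    {p : P} (hp : p ∈ t.closedInterior) (hne : p ≠ t.points i₁) :
    ∠ (t.points i₂) (t.points i₁) p + ∠ p (t.points i₁) (t.points i₃) =
      ∠ (t.points i₂) (t.points i₁) (t.points i₃) := by
  obtain ⟨w, hw, rfl⟩ := eq_affineCombination_of_mem_affineSpan_of_fintype
    (t.closedInterior_subset_affineSpan hp)
  rw [Affine.Simplex.affineCombination_mem_closedInterior_iff hw] at hp
  refine (InnerProductGeometry.angle_eq_angle_add_add_angle_add_of_mem_span
    (vsub_ne_zero.2 hne) ?_).symm
  rw [Finset.univ.affineCombination_eq_weightedVSubOfPoint_vadd_of_sum_eq_one w t.points hw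
    (t.points i₁), vadd_vsub, Finset.weightedVSubOfPoint_apply]
  refine Submodule.sum_mem _ fun j _ ↦ ?_
  have vertex_mem : t.points j -ᵥ t.points i₁ ∈
      Submodule.span NNReal {t.points i₂ -ᵥ t.points i₁, t.points i₃ -ᵥ t.points i₁} := by
    obtain rfl | rfl | rfl : j = i₁ ∨ j = i₂ ∨ j = i₃ := by lia
    · simp
    · exact Submodule.subset_span (by simp)
    · exact Submodule.subset_span (by simp)
  exact Submodule.smul_mem _ (⟨w j, (hp j).1⟩ : NNReal) vertex_mem

theorem two_mul_angle_incenter_touchpoint (h₁₂ : i₁ ≠ i₂) (h₁₃ : i₁ ≠ i₃) (h₂₃ : i₂ ≠ i₃) :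
    2 * ∠ t.incenter (t.points i₁) (t.touchpoint ∅ i₂) =
      ∠ (t.points i₂) (t.points i₁) (t.points i₃) := by
  have equal_halves : ∠ t.incenter (t.points i₁) (t.touchpoint ∅ i₂) =
      ∠ t.incenter (t.points i₁) (t.touchpoint ∅ i₃) :=
    t.angle_incenter_touchpoint_eq (t.points_mem_affineSpan_faceOpposite.2 h₁₂)
      (t.points_mem_affineSpan_faceOpposite.2 h₁₃)
  calc
    2 * ∠ t.incenter (t.points i₁) (t.touchpoint ∅ i₂)
      = ∠ (t.touchpoint ∅ i₃) (t.points i₁) t.incenter +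
          ∠ t.incenter (t.points i₁) (t.touchpoint ∅ i₂) := by
        rw [two_mul, angle_comm (t.touchpoint ∅ i₃), equal_halves]
    _ = ∠ (t.points i₂) (t.points i₁) t.incenter + ∠ t.incenter (t.points i₁) (t.points i₃) := by
        rw [(t.sbtw_touchpoint_empty h₁₃ h₁₂ h₂₃.symm).angle_eq_left,
          (t.sbtw_touchpoint_empty h₁₂ h₁₃ h₂₃).angle_eq_right]
    _ = ∠ (t.points i₂) (t.points i₁) (t.points i₃) :=
        angle_add_angle_of_mem_closedInterior t h₁₂ h₁₃ h₂₃
          (t.interior_subset_closedInterior t.incenter_mem_interior) (t.incenter_ne_point i₁)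

theorem law_of_cotangents_general (h₁₂ : i₁ ≠ i₂) (h₁₃ : i₁ ≠ i₃) (h₂₃ : i₂ ≠ i₃) :
    t.inradius = ((dist (t.points i₃) (t.points i₁) + dist (t.points i₁) (t.points i₂) +
        dist (t.points i₂) (t.points i₃)) / 2 - dist (t.points i₂) (t.points i₃)) *
      tan (∠ (t.points i₂) (t.points i₁) (t.points i₃) / 2) := by
  rw [← dist_touchpoint_eq_semiperimeter_sub t h₁₂ h₁₃ h₂₃,
    ← two_mul_angle_incenter_touchpoint t h₁₂ h₁₃ h₂₃, mul_div_cancel_left₀ _ two_ne_zero]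
  exact inradius_eq_dist_touchpoint_mul_tan t h₁₂
    (t.excenterExists_empty.touchpoint_ne_point i₂ i₁).symm

end Triangle

theorem triangleInradius_eq_inradius (A B C : EuclideanSpace ℝ (Fin 2))
    (h : AffineIndependent ℝ ![A, B, C]) :
    triangleInradius A B C = Affine.Simplex.inradius ⟨![A, B, C], h⟩ := by
  have span_eq_top : affineSpan ℝ (Set.range ![A, B, C]) = ⊤ := by
    rw [h.affineSpan_eq_top_iff_card_eq_finrank_add_one]
    simp
  have region_eq : triangleRegion A B C = Affine.Simplex.closedInterior ⟨![A, B, C], h⟩ := by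
    rw [triangleRegion, ← Affine.Simplex.convexHull_eq_closedInterior]
    simp only [Matrix.range_cons, Matrix.range_empty, Set.union_empty, Set.singleton_union]
  rw [triangleInradius, region_eq]
  exact (isGreatest_inradius _ span_eq_top).csSup_eq

/-- The law of cotangents: `r = (s - c) · tan (γ/2)`, where `s` is the
semiperimeter, `c = dist A B`, and `γ` is the interior angle at `C`. -/
theorem law_of_cotangents (A B C : EuclideanSpace ℝ (Fin 2))
    (h : AffineIndependent ℝ ![A, B, C]) :
    triangleInradius A B C =
      ((dist B C + dist C A + dist A B) / 2 - dist A B) *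
        Real.tan (EuclideanGeometry.angle A C B / 2) := by
  rw [triangleInradius_eq_inradius A B C h]
  exact law_of_cotangents_general ⟨![A, B, C], h⟩ (i₁ := 2) (i₂ := 0) (i₃ := 1)
    (by decide) (by decide) (by decide)
end

section
/- Let θ be a real number with 0 < θ ≤ π/3, and let A, B, C be affinely independent points in the Euclidean plane ℝ² such that all three interior angles of the triangle ABC are at least θ. Then the perimeter dist(A,B) + dist(B,C) + dist(C,A) of the triangle is at most 6·cot(θ/2) times the inradius of the triangle. -/
open Real EuclideanGeometry Metric

/-!
The touchpoint of the incircle cuts each side of the triangle into two tangent segments, so the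
perimeter is a sum of six tangent lengths. If `β` is the angle at a vertex between a side and the
line to the incenter, the tangent lengths from that vertex are `r * cot β`, where `r` is the radius
of the incircle. The line to the incenter makes the angle `β` with both sides, so the triangle
inequality for angles gives `θ ≤ 2 * β`, and each tangent length is at most `r * cot (θ / 2)`.
-/

section Cot

lemma cot_eq_tan_pi_div_two_sub (x : ℝ) : Real.cot x = Real.tan (π / 2 - x) := by
  rw [tan_pi_div_two_sub, tan_inv_eq_cot]

lemma antitoneOn_cot : AntitoneOn Real.cot (Set.Ioo 0 π) := by
  rintro x ⟨hx₀, hxπ⟩ y ⟨hy₀, hyπ⟩ hxy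
  rw [cot_eq_tan_pi_div_two_sub, cot_eq_tan_pi_div_two_sub]
  exact strictMonoOn_tan.monotoneOn ⟨by linarith, by linarith⟩ ⟨by linarith, by linarith⟩
    (by linarith)

lemma cot_nonneg_of_nonneg_of_le_pi_div_two {x : ℝ} (hx₀ : 0 ≤ x) (hx : x ≤ π / 2) :
    0 ≤ Real.cot x := by
  rw [cot_eq_tan_pi_div_two_sub]
  exact tan_nonneg_of_nonneg_of_le_pi_div_two (by linarith) (by linarith)

end Cot

section Inball

theorem bddAbove_setOf_closedBall_subset {E : Type*} [NormedAddCommGroup E] [NormedSpace ℝ E]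
    [Nontrivial E] {s : Set E} (hs : Bornology.IsBounded s) :
    BddAbove {r : ℝ | 0 ≤ r ∧ ∃ c, closedBall c r ⊆ s} := by
  refine ⟨diam s, ?_⟩
  rintro r ⟨hr, c, hc⟩
  calc r ≤ 2 * r := by linarith
    _ = diam (closedBall c r) := (diam_closedBall_eq c hr).symm
    _ ≤ diam s := diam_mono hc hs

variable {V P : Type*} [NormedAddCommGroup V] [InnerProductSpace ℝ V] [MetricSpace P]
  [NormedAddTorsor V P] {n : ℕ} [NeZero n] (s : Affine.Simplex ℝ P n)

lemma signedInfDist_sub_signedInfDist_le_dist (i : Fin (n + 1)) (p q : P) :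
    s.signedInfDist i p - s.signedInfDist i q ≤ dist p q := by
  rw [Affine.Simplex.signedInfDist, AffineSubspace.signedInfDist_def, signedDist_triangle_left,
    dist_comm]
  exact signedDist_le_dist _ _ _

lemma mem_closedInterior_of_signedInfDist_nonneg {p : P}
    (hp : p ∈ affineSpan ℝ (Set.range s.points)) (h : ∀ i, 0 ≤ s.signedInfDist i p) :
    p ∈ s.closedInterior := by
  obtain ⟨w, hw, rfl⟩ := eq_affineCombination_of_mem_affineSpan_of_fintype hp
  have hw₀ (i : Fin (n + 1)) : 0 ≤ w i := by
    have hi := h i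
    rw [s.signedInfDist_affineCombination i hw] at hi
    exact nonneg_of_mul_nonneg_left hi (norm_pos_iff.mpr (vsub_ne_zero.mpr (s.ne_altitudeFoot i)))
  rw [Affine.Simplex.affineCombination_mem_closedInterior_iff hw]
  exact fun i ↦ ⟨hw₀ i, hw ▸ Finset.single_le_sum (fun j _ ↦ hw₀ j) (Finset.mem_univ i)⟩

theorem closedBall_incenter_inradius_inter_affineSpan_subset_closedInterior :
    closedBall s.incenter s.inradius ∩ affineSpan ℝ (Set.range s.points) ⊆ s.closedInterior := by
  rintro p ⟨hball, hspan⟩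
  refine mem_closedInterior_of_signedInfDist_nonneg s hspan fun i ↦ ?_
  have hdist := signedInfDist_sub_signedInfDist_le_dist s i s.incenter p
  rw [s.signedInfDist_incenter] at hdist
  linarith [mem_closedBall'.mp hball]

theorem inradius_le_triangleInradius {A B C : EuclideanSpace ℝ (Fin 2)}
    (h : AffineIndependent ℝ ![A, B, C]) :
    Affine.Simplex.inradius ⟨![A, B, C], h⟩ ≤ triangleInradius A B C := by
  set t : Affine.Triangle ℝ (EuclideanSpace ℝ (Fin 2)) := ⟨![A, B, C], h⟩
  have hregion : triangleRegion A B C = t.closedInterior := by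
    rw [← t.convexHull_eq_closedInterior, triangleRegion]
    simp only [t, Matrix.range_cons, Matrix.range_empty, Set.union_empty, Set.singleton_union]
  have hspan : affineSpan ℝ (Set.range t.points) = ⊤ := by
    rw [h.affineSpan_eq_top_iff_card_eq_finrank_add_one]
    simp
  have hball : closedBall t.incenter t.inradius ⊆ triangleRegion A B C := by
    simpa only [hspan, AffineSubspace.top_coe, Set.inter_univ, ← hregion] using
      closedBall_incenter_inradius_inter_affineSpan_subset_closedInterior t
  have hbounded : Bornology.IsBounded (triangleRegion A B C) :=
    isBounded_convexHull.mpr (Set.toFinite _).isBounded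
  exact le_csSup (bddAbove_setOf_closedBall_subset hbounded) ⟨t.inradius_pos.le, _, hball⟩

end Inball

section TangentLength

variable {V P : Type*} [NormedAddCommGroup V] [InnerProductSpace ℝ V] [MetricSpace P]
  [NormedAddTorsor V P]

lemma angle_incenter_touchpoint_eq_pi_div_two {n : ℕ} [NeZero n] (s : Affine.Simplex ℝ P n)
    {i : Fin (n + 1)} {p : P} (hp : p ∈ affineSpan ℝ (Set.range (s.faceOpposite i).points)) :
    ∠ s.incenter (s.touchpoint ∅ i) p = π / 2 := by
  rw [angle, ← InnerProductGeometry.inner_eq_zero_iff_angle_eq_pi_div_two,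
    ← neg_vsub_eq_vsub_rev, inner_neg_left, neg_eq_zero]
  exact (s.isTangentAt_insphere_touchpoint i).inner_right_eq_zero_of_mem hp

lemma dist_touchpoint_eq_inradius_mul_cot {n : ℕ} [NeZero n] (s : Affine.Simplex ℝ P n)
    {i : Fin (n + 1)} {p : P} (hp : p ∈ affineSpan ℝ (Set.range (s.faceOpposite i).points)) :
    dist p (s.touchpoint ∅ i) = s.inradius * Real.cot (∠ s.incenter p (s.touchpoint ∅ i)) := by
  rw [← tan_inv_eq_cot, angle_comm,
    tan_angle_of_angle_eq_pi_div_two (angle_incenter_touchpoint_eq_pi_div_two s hp),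
    s.dist_incenter, inv_div, mul_div_cancel₀ _ s.inradius_pos.ne']

lemma point_mem_affineSpan_range_faceOpposite {n : ℕ} [NeZero n] (s : Affine.Simplex ℝ P n)
    {i j : Fin (n + 1)} (hij : i ≠ j) :
    s.points i ∈ affineSpan ℝ (Set.range (s.faceOpposite j).points) := by
  rw [s.range_faceOpposite_points]
  exact mem_affineSpan ℝ (Set.mem_image_of_mem s.points hij)

variable (t : Affine.Triangle ℝ P) {i j k : Fin 3} {θ : ℝ}

lemma angle_le_two_mul_angle_incenter_touchpoint (hij : i ≠ j) (hik : i ≠ k) (hjk : j ≠ k) :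
    ∠ (t.points j) (t.points i) (t.points k) ≤
      2 * ∠ t.incenter (t.points i) (t.touchpoint ∅ k) := by
  have hj : ∠ (t.points j) (t.points i) t.incenter =
      ∠ t.incenter (t.points i) (t.touchpoint ∅ k) := by
    rw [angle_comm, (t.sbtw_touchpoint_empty hik hij hjk.symm).angle_eq_right]
  have hk : ∠ t.incenter (t.points i) (t.points k) =
      ∠ t.incenter (t.points i) (t.touchpoint ∅ k) := by
    rw [← (t.sbtw_touchpoint_empty hij hik hjk).angle_eq_right,
      t.angle_incenter_touchpoint_eq (point_mem_affineSpan_range_faceOpposite t hij)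
        (point_mem_affineSpan_range_faceOpposite t hik)]
  calc ∠ (t.points j) (t.points i) (t.points k)
      ≤ ∠ (t.points j) (t.points i) t.incenter + ∠ t.incenter (t.points i) (t.points k) :=
        angle_le_angle_add_angle _ _ _ _
    _ = 2 * ∠ t.incenter (t.points i) (t.touchpoint ∅ k) := by rw [hj, hk, two_mul]

lemma dist_touchpoint_le_cot_mul_inradius (hij : i ≠ j) (hik : i ≠ k) (hjk : j ≠ k) (hθ₀ : 0 < θ)
    (hθ : θ ≤ ∠ (t.points j) (t.points i) (t.points k)) :
    dist (t.points i) (t.touchpoint ∅ k) ≤ Real.cot (θ / 2) * t.inradius := by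
  have hmem := point_mem_affineSpan_range_faceOpposite t hik
  have hlower := angle_le_two_mul_angle_incenter_touchpoint t hij hik hjk
  have hupper : ∠ t.incenter (t.points i) (t.touchpoint ∅ k) < π / 2 := by
    rw [angle_comm]
    exact angle_lt_pi_div_two_of_angle_eq_pi_div_two
      (angle_incenter_touchpoint_eq_pi_div_two t hmem) (t.touchpoint_empty_ne_point k i).symm
  rw [dist_touchpoint_eq_inradius_mul_cot t hmem, mul_comm]
  exact mul_le_mul_of_nonneg_right
    (antitoneOn_cot ⟨by linarith, by linarith⟩ ⟨by linarith, by linarith⟩ (by linarith))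
    t.inradius_pos.le

lemma dist_le_two_mul_cot_mul_inradius (hij : i ≠ j) (hik : i ≠ k) (hjk : j ≠ k) (hθ₀ : 0 < θ)
    (hi : θ ≤ ∠ (t.points k) (t.points i) (t.points j))
    (hj : θ ≤ ∠ (t.points k) (t.points j) (t.points i)) :
    dist (t.points i) (t.points j) ≤ 2 * Real.cot (θ / 2) * t.inradius := by
  have hsplit := (t.sbtw_touchpoint_empty hik hij hjk.symm).wbtw.dist_add_dist
  have htangent_i := dist_touchpoint_le_cot_mul_inradius t hij hik hjk hθ₀
    (hi.trans_eq (angle_comm _ _ _))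
  have htangent_j := dist_touchpoint_le_cot_mul_inradius t hij.symm hjk hik hθ₀
    (hj.trans_eq (angle_comm _ _ _))
  rw [dist_comm] at htangent_j
  linarith

theorem perimeter_le_cot_mul_inradius_general (hθ₀ : 0 < θ)
    (h₀ : θ ≤ ∠ (t.points 1) (t.points 0) (t.points 2))
    (h₁ : θ ≤ ∠ (t.points 0) (t.points 1) (t.points 2))
    (h₂ : θ ≤ ∠ (t.points 0) (t.points 2) (t.points 1)) :
    dist (t.points 0) (t.points 1) + dist (t.points 1) (t.points 2) +
      dist (t.points 2) (t.points 0) ≤ 6 * Real.cot (θ / 2) * t.inradius := by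
  have h₀₁ := dist_le_two_mul_cot_mul_inradius t (i := 0) (j := 1) (k := 2)
    (by decide) (by decide) (by decide) hθ₀
    (h₀.trans_eq (angle_comm _ _ _)) (h₁.trans_eq (angle_comm _ _ _))
  have h₁₂ := dist_le_two_mul_cot_mul_inradius t (i := 1) (j := 2) (k := 0)
    (by decide) (by decide) (by decide) hθ₀ h₁ h₂
  have h₂₀ := dist_le_two_mul_cot_mul_inradius t (i := 2) (j := 0) (k := 1)
    (by decide) (by decide) (by decide) hθ₀ (h₂.trans_eq (angle_comm _ _ _)) h₀
  linarith

end TangentLength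

/-- If all interior angles of a nondegenerate triangle are at least `θ`
(with `0 < θ ≤ π/3`), then the perimeter of the triangle is at most
`6 · cot(θ/2)` times the inradius. -/
theorem perimeter_le_cot_mul_inradius (θ : ℝ) (hθ₀ : 0 < θ) (hθ₁ : θ ≤ π / 3)
    (A B C : EuclideanSpace ℝ (Fin 2)) (h : AffineIndependent ℝ ![A, B, C])
    (hA : θ ≤ EuclideanGeometry.angle B A C)
    (hB : θ ≤ EuclideanGeometry.angle A B C)
    (hC : θ ≤ EuclideanGeometry.angle A C B) :
    dist A B + dist B C + dist C A ≤
      6 * Real.cot (θ / 2) * triangleInradius A B C := by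
  have hcot : 0 ≤ Real.cot (θ / 2) :=
    cot_nonneg_of_nonneg_of_le_pi_div_two (by linarith) (by linarith [pi_pos])
  exact (perimeter_le_cot_mul_inradius_general ⟨![A, B, C], h⟩ hθ₀ hA hB hC).trans
    (mul_le_mul_of_nonneg_left (inradius_le_triangleInradius h) (by positivity))
end
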